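/- Let A be a Banach algebra with a bounded approximate identity. If the projective tensor product A ⊗̂ A is amenable, then A ⊗̂ A^{op} is also amenable. -/

import Mathlib

open Filter Topology MulOpposite

/-- A Banach `A`-bimodule structure on the Banach space `X`:
`L a x = a • x` (left action), `R a x = x • a` (right action),
given as continuous bilinear maps. -/
structure BanachBimodule (A X : Type*) [NonUnitalNormedRing A] [NormedSpace ℂ A]
    [NormedAddCommGroup X] [NormedSpace ℂ X] where
  L : A →L[ℂ] X →L[ℂ] X
  R : A →L[ℂ] X →L[ℂ] X
  L_mul : ∀ a b : A, L (a * b) = (L a).comp (L b)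
  R_mul : ∀ a b : A, R (a * b) = (R b).comp (R a)
  LR_comm : ∀ (a b : A) (x : X), R b (L a x) = L a (R b x)

/-- `D : A → X*` is a derivation into the dual Banach bimodule of `X`, written
pointwise: `D(ab) = a·D(b) + D(a)·b` where `(a·f)(x) = f(x·a)`, `(f·a)(x) = f(a·x)`. -/
def IsDualDerivation {A X : Type*} [NonUnitalNormedRing A] [NormedSpace ℂ A]
    [NormedAddCommGroup X] [NormedSpace ℂ X] (σ : BanachBimodule A X)
    (D : A →L[ℂ] (X →L[ℂ] ℂ)) : Prop :=
  ∀ (a b : A) (x : X), D (a * b) x = D b (σ.R a x) + D a (σ.L b x)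

/-- `D` is inner: `D a = a·f − f·a` for some `f ∈ X*`. -/
def IsInnerDualDerivation {A X : Type*} [NonUnitalNormedRing A] [NormedSpace ℂ A]
    [NormedAddCommGroup X] [NormedSpace ℂ X] (σ : BanachBimodule A X)
    (D : A →L[ℂ] (X →L[ℂ] ℂ)) : Prop :=
  ∃ f : X →L[ℂ] ℂ, ∀ (a : A) (x : X), D a x = f (σ.R a x) - f (σ.L a x)

/-- A Banach algebra is amenable if every continuous derivation into every dual
Banach bimodule is inner. -/
def Amenable (A : Type*) [NonUnitalNormedRing A] [NormedSpace ℂ A] : Prop :=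
  ∀ (X : Type) (_ : NormedAddCommGroup X) (_ : NormedSpace ℂ X) (_ : CompleteSpace X)
    (σ : BanachBimodule A X) (D : A →L[ℂ] (X →L[ℂ] ℂ)),
    IsDualDerivation σ D → IsInnerDualDerivation σ D

/-- Weak amenability: every continuous derivation `D : A → A*` into the dual
bimodule (`(a·f)(x) = f(xa)`, `(f·a)(x) = f(ax)`) is inner. -/
def WeaklyAmenable (A : Type*) [NonUnitalNormedRing A] [NormedSpace ℂ A] : Prop :=
  ∀ D : A →L[ℂ] (A →L[ℂ] ℂ),
    (∀ a b x : A, D (a * b) x = D b (x * a) + D a (b * x)) →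
    ∃ f : A →L[ℂ] ℂ, ∀ a x : A, D a x = f (x * a) - f (a * x)

/-- A bounded net in a normed space. -/
structure BddNet (X : Type*) [Norm X] where
  ι : Type
  [dir : SemilatticeSup ι]
  [ne : Nonempty ι]
  z : ι → X
  C : ℝ
  bdd : ∀ i, ‖z i‖ ≤ C

/-- The `atTop` filter of the (directed) index of a bounded net. -/
def BddNet.filter {X : Type*} [Norm X] (S : BddNet X) : Filter S.ι :=
  letI := S.dir; Filter.atTop

/-- The bounded net `S` is a two-sided bounded approximate identity for `A`. -/
def IsBAI {A : Type*} [NonUnitalNormedRing A] (S : BddNet A) : Prop :=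
  ∀ a : A, Tendsto (fun i => a * S.z i) S.filter (nhds a) ∧
           Tendsto (fun i => S.z i * a) S.filter (nhds a)

/-- `A` has a (two-sided) bounded approximate identity. -/
def HasBAI (A : Type*) [NonUnitalNormedRing A] : Prop := ∃ S : BddNet A, IsBAI S

/-- `T`, together with the continuous bilinear map `ι`, is (a realization of) the
projective tensor product `A ⊗̂ B` of the Banach algebras `A` and `B`:
`ι` is multiplicative ((a⊗b)(c⊗d) = ac⊗bd), satisfies the cross-norm estimate,
has dense linear span, and has the universal (norm-decreasing lifting) property
of the projective tensor norm. -/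
structure IsProjTensorProduct (A B T : Type*)
    [NonUnitalNormedRing A] [NormedSpace ℂ A] [NonUnitalNormedRing B] [NormedSpace ℂ B]
    [NonUnitalNormedRing T] [NormedSpace ℂ T] [CompleteSpace T] where
  ι : A →L[ℂ] B →L[ℂ] T
  norm_ι : ∀ a b, ‖ι a b‖ ≤ ‖a‖ * ‖b‖
  ι_mul : ∀ (a c : A) (b d : B), ι a b * ι c d = ι (a * c) (b * d)
  dense_span : Dense (Submodule.span ℂ (Set.range fun p : A × B => ι p.1 p.2) : Set T)
  lift : ∀ (E : Type) (_ : NormedAddCommGroup E) (_ : NormedSpace ℂ E) (_ : CompleteSpace E)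
    (φ : A →L[ℂ] B →L[ℂ] E), ∃ Φ : T →L[ℂ] E, (∀ a b, Φ (ι a b) = φ a b) ∧ ‖Φ‖ ≤ ‖φ‖

/-!
A bimodule over `A ⊗̂ B` is a pair of commuting bimodules over `A` and `B`, and exchanging the two
`B`-actions turns it into such a pair over `A` and `Bᵐᵒᵖ`. Likewise a derivation `D` of `A ⊗̂ B` is
the pair of `a ↦ D (a ⊗ 1)` and `b ↦ D (1 ⊗ b)`, subject to one relation saying that `a ⊗ 1` and
`1 ⊗ b` commute; it survives the exchange if the second derivation is replaced by its negative.
Without units, `a ⊗ 1` is the limit of `a ⊗ v` along a bounded approximate identity, which exists on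
bimodules where the approximate identities act as such. Restricting to the essential part of an
arbitrary bimodule is harmless, since a derivation vanishing on `A·X·A` is inner by a weak-* limit
argument.
-/

section BoundedLimits

variable {𝕜 ι A X E : Type*} [NontriviallyNormedField 𝕜]
  [SeminormedAddCommGroup A] [NormedSpace 𝕜 A]
  [NormedAddCommGroup X] [NormedSpace 𝕜 X] [NormedAddCommGroup E] [NormedSpace 𝕜 E]
  {F : Filter ι}

lemma isBoundedUnder_norm_clm_apply (Φ : X →L[𝕜] E) {u : ι → X}
    (hu : F.IsBoundedUnder (· ≤ ·) fun i => ‖u i‖) :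
    F.IsBoundedUnder (· ≤ ·) fun i => ‖Φ (u i)‖ := by
  obtain ⟨C, hC⟩ := hu
  exact ⟨‖Φ‖ * C, (eventually_map.1 hC).mono fun i hi => Φ.le_opNorm_of_le hi⟩

lemma tendsto_clm_apply_left (K : A →L[𝕜] X →L[𝕜] E) {u : ι → A} {a : A}
    (hu : Tendsto u F (𝓝 a)) (x : X) : Tendsto (fun i => K (u i) x) F (𝓝 (K a x)) :=
  ((K.flip x).continuous.tendsto a).comp hu

lemma tendsto_clm_of_mem_closure {S : ι → X →L[𝕜] E}
    (hS : F.IsBoundedUnder (· ≤ ·) fun i => ‖S i‖) (G : X →L[𝕜] E) {s : Set X}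
    (hs : ∀ x ∈ s, Tendsto (S · x) F (𝓝 (G x))) {x : X} (hx : x ∈ closure s) :
    Tendsto (S · x) F (𝓝 (G x)) := by
  obtain ⟨C, hC⟩ := hS
  have hM : 0 < |C| + ‖G‖ + 1 := by positivity
  refine Metric.tendsto_nhds.2 fun ε hε => ?_
  obtain ⟨y, hys, hxy⟩ := Metric.mem_closure_iff.1 hx (ε / 2 / (|C| + ‖G‖ + 1)) (by positivity)
  rw [dist_eq_norm, lt_div_iff₀ hM] at hxy
  filter_upwards [eventually_map.1 hC, Metric.tendsto_nhds.1 (hs y hys) (ε / 2) (half_pos hε)]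
    with i hiC hiy
  have hdiff : ‖(S i - G) (x - y)‖ ≤ (|C| + ‖G‖) * ‖x - y‖ :=
    (S i - G).le_of_opNorm_le ((norm_sub_le _ _).trans
      (add_le_add_left (hiC.trans (le_abs_self C)) _)) _
  have hsplit : S i x - G x = (S i - G) (x - y) + (S i y - G y) := by
    simp only [map_sub, sub_apply]; abel
  calc dist (S i x) (G x) = ‖(S i - G) (x - y) + (S i y - G y)‖ := by rw [dist_eq_norm, hsplit]
    _ ≤ (|C| + ‖G‖) * ‖x - y‖ + ‖S i y - G y‖ := norm_add_le_of_le hdiff le_rfl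
    _ < ε := by rw [dist_eq_norm] at hiy; nlinarith [norm_nonneg (x - y)]

lemma tendsto_clm_of_dense_span {S : ι → X →L[𝕜] E}
    (hS : F.IsBoundedUnder (· ≤ ·) fun i => ‖S i‖) (G : X →L[𝕜] E) {s : Set X}
    (hs : Dense (Submodule.span 𝕜 s : Set X)) (h : ∀ x ∈ s, Tendsto (S · x) F (𝓝 (G x)))
    (x : X) : Tendsto (S · x) F (𝓝 (G x)) := by
  refine tendsto_clm_of_mem_closure hS G (fun y hy => ?_) (hs x)
  induction hy using Submodule.span_induction with
  | mem y hy => exact h y hy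
  | zero => simpa using tendsto_const_nhds
  | add y z _ _ hy hz => simpa using hy.add hz
  | smul c y _ hy => simpa using hy.const_smul c

lemma exists_tendsto_clm_of_dense [CompleteSpace E] [F.NeBot] {S : ι → X →L[𝕜] E}
    (hS : F.IsBoundedUnder (· ≤ ·) fun i => ‖S i‖) {s : Set X} (hs : Dense s)
    (h : ∀ x ∈ s, ∃ y, Tendsto (S · x) F (𝓝 y)) (x : X) :
    ∃ y, Tendsto (S · x) F (𝓝 y) := by
  obtain ⟨C, hC⟩ := hS
  have hbdd : (F ×ˢ F).IsBoundedUnder (· ≤ ·) fun p => ‖S p.2 - S p.1‖ :=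
    ⟨C + C, eventually_map.2 <| ((eventually_map.1 hC).prod_mk
      (eventually_map.1 hC)).mono fun p hp => norm_sub_le_of_le hp.2 hp.1⟩
  have hdiff := tendsto_clm_of_mem_closure hbdd 0 (fun y hy => by
    obtain ⟨z, hz⟩ := h y hy
    simpa using (hz.comp tendsto_snd).sub (hz.comp tendsto_fst)) (hs x)
  exact cauchy_map_iff_exists_tendsto.1 <|
    (IsUniformAddGroup.cauchy_map_iff_tendsto_swapped F fun i => S i x).2
      ⟨inferInstance, by simpa using hdiff⟩

lemma exists_weakStar_limit [ProperSpace 𝕜] (U : Ultrafilter ι) {S : ι → X →L[𝕜] 𝕜}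
    (hS : (U : Filter ι).IsBoundedUnder (· ≤ ·) fun i => ‖S i‖) :
    ∃ f : X →L[𝕜] 𝕜, ∀ x, Tendsto (S · x) U (𝓝 (f x)) := by
  obtain ⟨C, hC⟩ := hS
  obtain ⟨f, -, hf⟩ := (WeakDual.isCompact_closedBall (0 : StrongDual 𝕜 X) C).ultrafilter_le_nhds
    (U.map fun i => StrongDual.toWeakDual (S i)) <| le_principal_iff.2 <|
      (eventually_map.1 hC).mono fun i hi => by simpa using hi
  exact ⟨WeakDual.toStrongDual f, fun x => ((WeakDual.eval_continuous x).tendsto f).comp hf⟩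

end BoundedLimits

section SlotLimits

variable {𝕜 A B X E : Type*} [NontriviallyNormedField 𝕜]
  [NormedAddCommGroup A] [NormedSpace 𝕜 A] [NormedAddCommGroup B] [NormedSpace 𝕜 B]
  [NormedAddCommGroup X] [NormedSpace 𝕜 X] [NormedAddCommGroup E] [NormedSpace 𝕜 E]

/-- `G` is the partial limit of the trilinear map `K` along the filter `V` on its second argument:
if `V` is an approximate unit of `B`, then `G a` stands for "`K a 1`". -/
def IsPartialLimit (K : A →L[𝕜] B →L[𝕜] X →L[𝕜] E) (V : Filter B) (G : A →L[𝕜] X →L[𝕜] E) : Prop :=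
  ∀ a x, Tendsto (fun b => K a b x) V (𝓝 (G a x))

lemma exists_isPartialLimit [CompleteSpace E] (K : A →L[𝕜] B →L[𝕜] X →L[𝕜] E) {V : Filter B}
    [V.NeBot] (hV : V.IsBoundedUnder (· ≤ ·) norm) {s : Set X} (hs : Dense s)
    (h : ∀ a, ∀ x ∈ s, ∃ y, Tendsto (fun b => K a b x) V (𝓝 y)) :
    ∃ G, IsPartialLimit K V G := by
  choose g hg using fun a => exists_tendsto_clm_of_dense (isBoundedUnder_norm_clm_apply (K a) hV)
    hs (h a)
  obtain ⟨C, hC⟩ := hV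
  refine ⟨LinearMap.mkContinuous₂ (LinearMap.mk₂ 𝕜 g
    (fun a a' x => tendsto_nhds_unique (hg _ _) (by simpa using (hg a x).add (hg a' x)))
    (fun c a x => tendsto_nhds_unique (hg _ _) (by simpa using (hg a x).const_smul c))
    (fun a x y => tendsto_nhds_unique (hg _ _) (by simpa using (hg a x).add (hg a y)))
    (fun c a x => tendsto_nhds_unique (hg _ _) (by simpa using (hg a x).const_smul c)))
    (‖K.flip‖ * C) fun a x => ?_, hg⟩
  exact le_of_tendsto (hg a x).norm ((eventually_map.1 hC).mono fun b hb =>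
    (K.flip b).le_of_opNorm₂_le_of_le (K.flip.le_opNorm_of_le hb) le_rfl le_rfl)

lemma tendsto_of_tendsto_prod {ι κ Y : Type*} [TopologicalSpace Y] [RegularSpace Y]
    {F : Filter ι} {F' : Filter κ} [F'.NeBot] {f : ι × κ → Y} {g : ι → Y} {y : Y}
    (hf : Tendsto f (F ×ˢ F') (𝓝 y)) (hg : ∀ i, Tendsto (fun j => f (i, j)) F' (𝓝 (g i))) :
    Tendsto g F (𝓝 y) := by
  refine (closed_nhds_basis y).tendsto_right_iff.2 fun W hW => ?_
  filter_upwards [(hf.eventually hW.1).curry] with i hi using hW.2.mem_of_tendsto (hg i) hi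

end SlotLimits

section BoundedApproximateUnit

variable {A B T : Type*} [NonUnitalNormedRing A] [NonUnitalNormedRing B] [NonUnitalNormedRing T]

/-- A bounded approximate identity, presented by the filter of its tails instead of a net. -/
structure IsBoundedApproximateUnit (U : Filter A) : Prop extends U.IsApproximateUnit where
  bounded : U.IsBoundedUnder (· ≤ ·) norm

lemma HasBAI.exists_isBoundedApproximateUnit (hA : HasBAI A) :
    ∃ U : Filter A, IsBoundedApproximateUnit U := by
  obtain ⟨S, hS⟩ := hA
  have : S.filter.NeBot := letI := S.dir; letI := S.ne; atTop_neBot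
  exact ⟨S.filter.map S.z,
    { tendsto_mul_left := fun a => tendsto_map'_iff.2 (hS a).1
      tendsto_mul_right := fun a => tendsto_map'_iff.2 (hS a).2
      neBot := inferInstance
      bounded := ⟨S.C, eventually_map.2 (eventually_map.2 (.of_forall S.bdd))⟩ }⟩

namespace IsBoundedApproximateUnit

lemma mono {U U' : Filter A} [U'.NeBot] (hU : IsBoundedApproximateUnit U) (h : U' ≤ U) :
    IsBoundedApproximateUnit U' where
  tendsto_mul_left a := (hU.tendsto_mul_left a).mono_left h
  tendsto_mul_right a := (hU.tendsto_mul_right a).mono_left h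
  bounded := hU.bounded.mono h

lemma map_op {U : Filter A} (hU : IsBoundedApproximateUnit U) :
    IsBoundedApproximateUnit (U.map op) where
  tendsto_mul_left a := tendsto_map'_iff.2 <|
    (continuous_op.tendsto a.unop).comp (hU.tendsto_mul_right a.unop)
  tendsto_mul_right a := tendsto_map'_iff.2 <|
    (continuous_op.tendsto a.unop).comp (hU.tendsto_mul_left a.unop)
  neBot := hU.neBot.map op
  bounded := hU.bounded

variable [NormedSpace ℂ A] [NormedSpace ℂ B] [NormedSpace ℂ T] [IsScalarTower ℂ T T]
  [SMulCommClass ℂ T T]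

lemma map_tensor {k : A →L[ℂ] B →L[ℂ] T} (hk : ∀ a c b d, k a b * k c d = k (a * c) (b * d))
    (hk_dense : Dense (Submodule.span ℂ (Set.range fun p : A × B => k p.1 p.2) : Set T))
    {U : Filter A} {V : Filter B} (hU : IsBoundedApproximateUnit U)
    (hV : IsBoundedApproximateUnit V) :
    IsBoundedApproximateUnit (map (fun p : A × B => k p.1 p.2) (U ×ˢ V)) := by
  have hk_tendsto {f : A × B → A × B} {p : A × B} (hf : Tendsto f (U ×ˢ V) (𝓝 p)) :
      Tendsto (fun q => k (f q).1 (f q).2) (U ×ˢ V) (𝓝 (k p.1 p.2)) :=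
    (k.continuous₂.tendsto p).comp hf
  have hbdd : (map (fun p : A × B => k p.1 p.2) (U ×ˢ V)).IsBoundedUnder (· ≤ ·) norm := by
    obtain ⟨C, hC⟩ := hU.bounded
    obtain ⟨C', hC'⟩ := hV.bounded
    exact ⟨‖k‖ * C * C', eventually_map.2 <| eventually_map.2 <|
      ((eventually_map.1 hC).prod_mk (eventually_map.1 hC')).mono fun p hp =>
        k.le_of_opNorm₂_le_of_le le_rfl hp.1 hp.2⟩
  have := hU.neBot
  have := hV.neBot
  refine { tendsto_mul_left := fun t => ?_, tendsto_mul_right := fun t => ?_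
           neBot := inferInstance, bounded := hbdd }
  · refine tendsto_clm_of_dense_span
      (isBoundedUnder_norm_clm_apply (ContinuousLinearMap.mul ℂ T).flip hbdd) (.id ℂ T)
      hk_dense ?_ t
    rintro _ ⟨p, rfl⟩
    refine tendsto_map'_iff.2 ?_
    simpa [Function.comp_def, hk] using hk_tendsto
      (((hU.tendsto_mul_left p.1).comp tendsto_fst).prodMk_nhds
        ((hV.tendsto_mul_left p.2).comp tendsto_snd))
  · refine tendsto_clm_of_dense_span
      (isBoundedUnder_norm_clm_apply (ContinuousLinearMap.mul ℂ T) hbdd) (.id ℂ T)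
      hk_dense ?_ t
    rintro _ ⟨p, rfl⟩
    refine tendsto_map'_iff.2 ?_
    simpa [Function.comp_def, hk] using hk_tendsto
      (((hU.tendsto_mul_right p.1).comp tendsto_fst).prodMk_nhds
        ((hV.tendsto_mul_right p.2).comp tendsto_snd))

end IsBoundedApproximateUnit

end BoundedApproximateUnit

section Bimodule

variable {A X : Type*} [NonUnitalNormedRing A] [NormedSpace ℂ A]
  [NormedAddCommGroup X] [NormedSpace ℂ X]

/-- The bilinear action on an invariant subspace. -/
noncomputable def restrictAction (K : A →L[ℂ] X →L[ℂ] X) (Y : Submodule ℂ X)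
    (hK : ∀ a, ∀ x ∈ Y, K a x ∈ Y) : A →L[ℂ] Y →L[ℂ] Y :=
  LinearMap.mkContinuous₂ (LinearMap.mk₂ ℂ (fun a x => ⟨K a x, hK a x x.2⟩)
    (fun _ _ _ => Subtype.ext (by simp)) (fun _ _ _ => Subtype.ext (by simp))
    (fun _ _ _ => Subtype.ext (by simp)) (fun _ _ _ => Subtype.ext (by simp)))
    ‖K‖ fun a x => K.le_opNorm₂ a x

@[simp]
lemma coe_restrictAction_apply (K : A →L[ℂ] X →L[ℂ] X) (Y : Submodule ℂ X)
    (hK : ∀ a, ∀ x ∈ Y, K a x ∈ Y) (a : A) (x : Y) : (restrictAction K Y hK a x : X) = K a x :=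
  rfl

namespace BanachBimodule

/-- The bimodule `X` is essential (neo-unital) with respect to `U`: the approximate unit `U` of `A`
acts on `X` from both sides as an approximate unit. -/
structure IsEssential (σ : BanachBimodule A X) (U : Filter A) : Prop where
  tendsto_L (x : X) : Tendsto (σ.L · x) U (𝓝 x)
  tendsto_R (x : X) : Tendsto (σ.R · x) U (𝓝 x)

/-- The inner derivation `a ↦ a·f − f·a` into the dual of `X`. -/
noncomputable def ad (σ : BanachBimodule A X) (f : X →L[ℂ] ℂ) : A →L[ℂ] X →L[ℂ] ℂ :=
  ContinuousLinearMap.compL ℂ X X ℂ f ∘L (σ.R - σ.L)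

@[simp]
lemma ad_apply (σ : BanachBimodule A X) (f : X →L[ℂ] ℂ) (a : A) (x : X) :
    σ.ad f a x = f (σ.R a x) - f (σ.L a x) := by
  simp [ad]

lemma isDualDerivation_ad (σ : BanachBimodule A X) (f : X →L[ℂ] ℂ) :
    IsDualDerivation σ (σ.ad f) := fun a b x => by
  simp only [ad_apply, σ.L_mul, σ.R_mul, σ.LR_comm, ContinuousLinearMap.comp_apply]
  ring

/-- The bimodule structure inherited by an invariant subspace. -/
noncomputable def restrict (σ : BanachBimodule A X) (Y : Submodule ℂ X)
    (hL : ∀ a, ∀ x ∈ Y, σ.L a x ∈ Y) (hR : ∀ a, ∀ x ∈ Y, σ.R a x ∈ Y) : BanachBimodule A Y where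
  L := restrictAction σ.L Y hL
  R := restrictAction σ.R Y hR
  L_mul a b := by ext x; simp [σ.L_mul]
  R_mul a b := by ext x; simp [σ.R_mul]
  LR_comm a b x := by ext; simp [σ.LR_comm]

variable (σ : BanachBimodule A X) {W : Filter A}

/-- The largest subspace of `X` on which `W` acts from both sides as an approximate unit. -/
def essentialPart (W : Filter A) : Submodule ℂ X where
  carrier := {x | Tendsto (σ.L · x) W (𝓝 x) ∧ Tendsto (σ.R · x) W (𝓝 x)}
  zero_mem' := by simp [tendsto_const_nhds]
  add_mem' hx hy := ⟨by simpa using hx.1.add hy.1, by simpa using hx.2.add hy.2⟩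
  smul_mem' c x hx := ⟨by simpa using hx.1.const_smul c, by simpa using hx.2.const_smul c⟩

lemma isClosed_essentialPart (hW : W.IsBoundedUnder (· ≤ ·) norm) :
    IsClosed (σ.essentialPart W : Set X) :=
  isClosed_of_closure_subset fun _ hx =>
    ⟨tendsto_clm_of_mem_closure (isBoundedUnder_norm_clm_apply σ.L hW) (.id ℂ X)
      (fun _ hy => hy.1) hx,
    tendsto_clm_of_mem_closure (isBoundedUnder_norm_clm_apply σ.R hW) (.id ℂ X)
      (fun _ hy => hy.2) hx⟩

lemma L_mem_essentialPart (hW : W.IsApproximateUnit) (a : A) {x : X}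
    (hx : Tendsto (σ.R · x) W (𝓝 x)) : σ.L a x ∈ σ.essentialPart W :=
  ⟨by simpa [σ.L_mul] using tendsto_clm_apply_left σ.L (hW.tendsto_mul_right a) x,
    by simpa [Function.comp_def, σ.LR_comm] using ((σ.L a).continuous.tendsto x).comp hx⟩

lemma R_mem_essentialPart (hW : W.IsApproximateUnit) (a : A) {x : X}
    (hx : Tendsto (σ.L · x) W (𝓝 x)) : σ.R a x ∈ σ.essentialPart W :=
  ⟨by simpa [Function.comp_def, ← σ.LR_comm] using ((σ.R a).continuous.tendsto x).comp hx,
    by simpa [σ.R_mul] using tendsto_clm_apply_left σ.R (hW.tendsto_mul_left a) x⟩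

lemma L_R_mem_essentialPart (hW : W.IsApproximateUnit) (a b : A) (x : X) :
    σ.L a (σ.R b x) ∈ σ.essentialPart W :=
  σ.L_mem_essentialPart hW a
    (by simpa [σ.R_mul] using tendsto_clm_apply_left σ.R (hW.tendsto_mul_left b) x)

end BanachBimodule

lemma isInnerDualDerivation_iff {σ : BanachBimodule A X} {D : A →L[ℂ] X →L[ℂ] ℂ} :
    IsInnerDualDerivation σ D ↔ ∃ f, D = σ.ad f := by
  simp [IsInnerDualDerivation, ContinuousLinearMap.ext_iff]

namespace IsDualDerivation

variable {σ : BanachBimodule A X} {D D' : A →L[ℂ] X →L[ℂ] ℂ} {W : Filter A}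

lemma sub (hD : IsDualDerivation σ D) (hD' : IsDualDerivation σ D') :
    IsDualDerivation σ (D - D') := fun a b x => by
  simp only [sub_apply, hD a b x, hD' a b x]
  ring

lemma tendsto_zero (hD : IsDualDerivation σ D) (hσ : σ.IsEssential W)
    (hW : IsBoundedApproximateUnit W) (x : X) : Tendsto (D · x) W (𝓝 0) := by
  have := hW.neBot
  have hzero (a : A) : Tendsto (fun u => D u (σ.R a x)) W (𝓝 0) := by
    have hdiff (u : A) : D u (σ.R a x) = D (a * u) x - D a (σ.L u x) := by rw [hD]; ring
    simpa [hdiff] using (tendsto_clm_apply_left D (hW.tendsto_mul_left a) x).sub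
      (((D a).continuous.tendsto x).comp (hσ.tendsto_L x))
  exact tendsto_clm_of_mem_closure (isBoundedUnder_norm_clm_apply D hW.bounded) 0
    (Set.forall_mem_range.2 hzero)
    (mem_closure_of_tendsto (hσ.tendsto_R x) (.of_forall Set.mem_range_self))

lemma exists_eq_add_of_eq_zero_on_L_R (hD : IsDualDerivation σ D)
    (hW : IsBoundedApproximateUnit W) (hD₀ : ∀ a s t x, D a (σ.L s (σ.R t x)) = 0) :
    ∃ f : X →L[ℂ] ℂ, (∀ a x, D a x = f (σ.R a x) + f (σ.L a x)) ∧
      ∀ a b x, f (σ.L a (σ.R b x)) = 0 := by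
  have := hW.neBot
  let 𝒲 := Ultrafilter.of W
  have h𝒲 : IsBoundedApproximateUnit (𝒲 : Filter A) := hW.mono (Ultrafilter.of_le W)
  obtain ⟨f₁, hf₁⟩ := exists_weakStar_limit 𝒲 (isBoundedUnder_norm_clm_apply D h𝒲.bounded)
  have hDL (a b : A) (x : X) : D a (σ.L b x) = f₁ (σ.L (a * b) x) := by
    have hca (c : A) : D (c * a) (σ.L b x) = D c (σ.L (a * b) x) := by
      rw [hD, σ.LR_comm, hD₀, zero_add, σ.L_mul, ContinuousLinearMap.comp_apply]
    refine tendsto_nhds_unique (tendsto_clm_apply_left D (h𝒲.tendsto_mul_right a) _) ?_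
    simpa only [hca] using hf₁ _
  have hDR (a b : A) (x : X) : D a (σ.R b x) = f₁ (σ.R (b * a) x) := by
    have hac (c : A) : D (a * c) (σ.R b x) = D c (σ.R (b * a) x) := by
      rw [hD, hD₀, add_zero, σ.R_mul, ContinuousLinearMap.comp_apply]
    refine tendsto_nhds_unique (tendsto_clm_apply_left D (h𝒲.tendsto_mul_left a) _) ?_
    simpa only [hac] using hf₁ _
  refine ⟨f₁, fun b x => ?_, fun a b x =>
    tendsto_nhds_unique (hf₁ _) (by simp only [hD₀, tendsto_const_nhds])⟩
  have hmul (a : A) : D (a * b) x = f₁ (σ.R (a * b) x) + f₁ (σ.L (a * b) x) := by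
    rw [hD, hDR, hDL]
  have hub := h𝒲.tendsto_mul_right b
  refine tendsto_nhds_unique (tendsto_clm_apply_left D hub x) ?_
  simpa only [hmul, Function.comp_def] using
    ((f₁.continuous.tendsto _).comp (tendsto_clm_apply_left σ.R hub x)).add
      ((f₁.continuous.tendsto _).comp (tendsto_clm_apply_left σ.L hub x))

lemma isInner_of_eq_zero_on_L_R (hD : IsDualDerivation σ D) (hW : IsBoundedApproximateUnit W)
    (hD₀ : ∀ a s t x, D a (σ.L s (σ.R t x)) = 0) : IsInnerDualDerivation σ D := by
  obtain ⟨f₁, hD_eq, hf₁_LR⟩ := hD.exists_eq_add_of_eq_zero_on_L_R hW hD₀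
  have := hW.neBot
  let 𝒲 := Ultrafilter.of W
  have h𝒲 : IsBoundedApproximateUnit (𝒲 : Filter A) := hW.mono (Ultrafilter.of_le W)
  obtain ⟨f₂, hf₂⟩ := exists_weakStar_limit 𝒲 (isBoundedUnder_norm_clm_apply
    (ContinuousLinearMap.compL ℂ X X ℂ f₁ ∘L σ.L) h𝒲.bounded)
  have hf₂L (a : A) (x : X) : f₂ (σ.L a x) = f₁ (σ.L a x) := by
    refine tendsto_nhds_unique (hf₂ _) ?_
    simpa [Function.comp_def, σ.L_mul] using (f₁.continuous.tendsto _).comp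
      (tendsto_clm_apply_left σ.L (h𝒲.tendsto_mul_right a) x)
  have hf₂R (a : A) (x : X) : f₂ (σ.R a x) = 0 :=
    tendsto_nhds_unique (hf₂ _) (by simp [hf₁_LR])
  refine ⟨f₁ - (2 : ℂ) • f₂, fun a x => ?_⟩
  simp only [sub_apply, smul_apply, hf₂L, hf₂R, hD_eq, smul_eq_mul]
  ring

lemma isInner_of_isInner_restrict (hD : IsDualDerivation σ D) (hW : IsBoundedApproximateUnit W)
    {Y : Submodule ℂ X} (hL : ∀ a, ∀ x ∈ Y, σ.L a x ∈ Y) (hR : ∀ a, ∀ x ∈ Y, σ.R a x ∈ Y)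
    (hY : ∀ s t x, σ.L s (σ.R t x) ∈ Y) {f₀ : Y →L[ℂ] ℂ}
    (hf₀ : ∀ a (y : Y), D a y = (σ.restrict Y hL hR).ad f₀ a y) : IsInnerDualDerivation σ D := by
  obtain ⟨g, hg, -⟩ := exists_extension_norm_eq Y f₀
  have hD₀ : ∀ a, ∀ y ∈ Y, (D - σ.ad g) a y = 0 := fun a y hy => by
    have hL_ext : g (σ.L a y) = f₀ ((σ.restrict Y hL hR).L a ⟨y, hy⟩) := hg ⟨σ.L a y, hL a y hy⟩
    have hR_ext : g (σ.R a y) = f₀ ((σ.restrict Y hL hR).R a ⟨y, hy⟩) := hg ⟨σ.R a y, hR a y hy⟩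
    simp [hf₀ a ⟨y, hy⟩, hL_ext, hR_ext]
  obtain ⟨f, hf⟩ := isInnerDualDerivation_iff.1 <|
    (hD.sub (σ.isDualDerivation_ad g)).isInner_of_eq_zero_on_L_R hW fun a s t x =>
      hD₀ a _ (hY s t x)
  exact isInnerDualDerivation_iff.2 ⟨g + f, by
    ext a x
    have := congr($hf a x)
    simp only [sub_apply, add_apply, BanachBimodule.ad_apply] at this ⊢
    linear_combination this⟩

end IsDualDerivation

lemma amenable_of_essential {W : Filter A} (hW : IsBoundedApproximateUnit W)
    (h : ∀ (X : Type) [NormedAddCommGroup X] [NormedSpace ℂ X] [CompleteSpace X]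
      (σ : BanachBimodule A X) (D : A →L[ℂ] X →L[ℂ] ℂ), σ.IsEssential W → IsDualDerivation σ D →
        IsInnerDualDerivation σ D) : Amenable A := by
  intro X _ _ _ σ D hD
  let Y := σ.essentialPart W
  have : CompleteSpace Y := (σ.isClosed_essentialPart hW.bounded).completeSpace_coe
  have hL : ∀ a, ∀ x ∈ Y, σ.L a x ∈ Y := fun a x hx =>
    σ.L_mem_essentialPart hW.toIsApproximateUnit a hx.2
  have hR : ∀ a, ∀ x ∈ Y, σ.R a x ∈ Y := fun a x hx =>
    σ.R_mem_essentialPart hW.toIsApproximateUnit a hx.1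
  have hess : (σ.restrict Y hL hR).IsEssential W :=
    ⟨fun y => tendsto_subtype_rng.2 y.2.1, fun y => tendsto_subtype_rng.2 y.2.2⟩
  let D' : A →L[ℂ] Y →L[ℂ] ℂ := (ContinuousLinearMap.compL ℂ Y X ℂ).flip Y.subtypeL ∘L D
  have hD' : IsDualDerivation (σ.restrict Y hL hR) D' := fun a b y => hD a b y
  obtain ⟨f₀, hf₀⟩ := isInnerDualDerivation_iff.1 (h Y (σ.restrict Y hL hR) D' hess hD')
  exact hD.isInner_of_isInner_restrict hW hL hR
    (fun s t x => σ.L_R_mem_essentialPart hW.toIsApproximateUnit s t x)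
    fun a y => congr($hf₀ a y)

end Bimodule

section DerivationPair

variable {A B X : Type*} [NonUnitalNormedRing A] [NormedSpace ℂ A]
  [NonUnitalNormedRing B] [NormedSpace ℂ B] [NormedAddCommGroup X] [NormedSpace ℂ X]

/-- Commuting bimodule structures over `A` and `B` on the same space. Over the essential modules of
algebras with bounded approximate identities this is the same as a bimodule over `A ⊗̂ B`. -/
structure CommutingBimodules (A B X : Type*) [NonUnitalNormedRing A] [NormedSpace ℂ A]
    [NonUnitalNormedRing B] [NormedSpace ℂ B] [NormedAddCommGroup X] [NormedSpace ℂ X] where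
  fst : BanachBimodule A X
  snd : BanachBimodule B X
  L_L_comm : ∀ a b x, fst.L a (snd.L b x) = snd.L b (fst.L a x)
  L_R_comm : ∀ a b x, fst.L a (snd.R b x) = snd.R b (fst.L a x)
  R_L_comm : ∀ a b x, fst.R a (snd.L b x) = snd.L b (fst.R a x)
  R_R_comm : ∀ a b x, fst.R a (snd.R b x) = snd.R b (fst.R a x)

/-- A derivation of `A` and one of `B` into the dual of `X` which are the restrictions
`D₁ a = D (a ⊗ 1)`, `D₂ b = D (1 ⊗ b)` of a common derivation `D` of `A ⊗̂ B`: the condition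
`compat` expresses that `a ⊗ 1` and `1 ⊗ b` commute. -/
structure IsDerivationPair (π : CommutingBimodules A B X) (D₁ : A →L[ℂ] X →L[ℂ] ℂ)
    (D₂ : B →L[ℂ] X →L[ℂ] ℂ) : Prop where
  fst : IsDualDerivation π.fst D₁
  snd : IsDualDerivation π.snd D₂
  compat : ∀ a b x, D₁ a (π.snd.L b x) + D₂ b (π.fst.R a x) =
    D₁ a (π.snd.R b x) + D₂ b (π.fst.L a x)

/-- Every pair of compatible derivations over essential commuting bimodules is implemented by one
functional. This is amenability of `A ⊗̂ B`, expressed without the tensor product. -/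
def PairAmenable (U : Filter A) (V : Filter B) : Prop :=
  ∀ (X : Type) [NormedAddCommGroup X] [NormedSpace ℂ X] [CompleteSpace X]
    (π : CommutingBimodules A B X) (D₁ : A →L[ℂ] X →L[ℂ] ℂ) (D₂ : B →L[ℂ] X →L[ℂ] ℂ),
    π.fst.IsEssential U → π.snd.IsEssential V → IsDerivationPair π D₁ D₂ →
      ∃ f, D₁ = π.fst.ad f ∧ D₂ = π.snd.ad f

/-- A bimodule over the opposite algebra, as a bimodule with left and right exchanged. -/
noncomputable def BanachBimodule.unop (σ : BanachBimodule Bᵐᵒᵖ X) : BanachBimodule B X where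
  L := σ.R ∘L (opContinuousLinearEquiv ℂ (M := B)).toContinuousLinearMap
  R := σ.L ∘L (opContinuousLinearEquiv ℂ (M := B)).toContinuousLinearMap
  L_mul a b := σ.R_mul (op b) (op a)
  R_mul a b := σ.L_mul (op b) (op a)
  LR_comm a b x := (σ.LR_comm (op b) (op a) x).symm

/-- Commuting bimodules over `A` and `Bᵐᵒᵖ`, as commuting bimodules over `A` and `B`. -/
noncomputable def CommutingBimodules.unop (π : CommutingBimodules A Bᵐᵒᵖ X) :
    CommutingBimodules A B X where
  fst := π.fst
  snd := π.snd.unop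
  L_L_comm a b x := π.L_R_comm a (op b) x
  L_R_comm a b x := π.L_L_comm a (op b) x
  R_L_comm a b x := π.R_R_comm a (op b) x
  R_R_comm a b x := π.R_L_comm a (op b) x

lemma IsDerivationPair.unop {π : CommutingBimodules A Bᵐᵒᵖ X} {D₁ : A →L[ℂ] X →L[ℂ] ℂ}
    {D₂ : Bᵐᵒᵖ →L[ℂ] X →L[ℂ] ℂ} (h : IsDerivationPair π D₁ D₂) :
    IsDerivationPair π.unop D₁
      (-(D₂ ∘L (opContinuousLinearEquiv ℂ (M := B)).toContinuousLinearMap)) where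
  fst := h.fst
  snd a b x := by
    change -D₂ (op b * op a) x =
      -D₂ (op b) (π.snd.L (op a) x) + -D₂ (op a) (π.snd.R (op b) x)
    linear_combination -h.snd (op b) (op a) x
  compat a b x := by
    change D₁ a (π.snd.R (op b) x) + -D₂ (op b) (π.fst.R a x) =
      D₁ a (π.snd.L (op b) x) + -D₂ (op b) (π.fst.L a x)
    linear_combination -h.compat a (op b) x

lemma PairAmenable.map_op {U : Filter A} {V : Filter B} (h : PairAmenable U V) :
    PairAmenable U (V.map op) := by
  intro X _ _ _ π D₁ D₂ hU hV hD
  have hV' : π.unop.snd.IsEssential V :=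
    ⟨fun x => tendsto_map'_iff.1 (hV.tendsto_R x), fun x => tendsto_map'_iff.1 (hV.tendsto_L x)⟩
  obtain ⟨f, hf₁, hf₂⟩ := h X π.unop _ _ hU hV' hD.unop
  refine ⟨f, hf₁, ?_⟩
  ext b x
  have hf : -D₂ b x = f (π.snd.L b x) - f (π.snd.R b x) :=
    congr($hf₂ b.unop x).trans (π.unop.snd.ad_apply f b.unop x)
  rw [BanachBimodule.ad_apply]
  linear_combination -hf

end DerivationPair

section ProjectiveTensorProduct

namespace IsProjTensorProduct

variable {A B T : Type*} [NonUnitalNormedRing A] [NormedSpace ℂ A]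
  [NonUnitalNormedRing B] [NormedSpace ℂ B] [NonUnitalNormedRing T] [NormedSpace ℂ T]
  [CompleteSpace T] (P : IsProjTensorProduct A B T)

section

variable {E : Type*} [NormedAddCommGroup E] [NormedSpace ℂ E]

include P

lemma clm_ext {F G : T →L[ℂ] E} (h : ∀ a b, F (P.ι a b) = G (P.ι a b)) : F = G :=
  ContinuousLinearMap.ext_on P.dense_span (by rintro _ ⟨p, rfl⟩; exact h p.1 p.2)

lemma clm_ext₂ {F G : T →L[ℂ] T →L[ℂ] E}
    (h : ∀ a b c d, F (P.ι a b) (P.ι c d) = G (P.ι a b) (P.ι c d)) : F = G :=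
  P.clm_ext fun a b => P.clm_ext (h a b)

end

section

variable {E : Type} [NormedAddCommGroup E] [NormedSpace ℂ E] [CompleteSpace E]

/-- The linearization of a bounded bilinear map. -/
noncomputable def extend (φ : A →L[ℂ] B →L[ℂ] E) : T →L[ℂ] E :=
  (P.lift E _ _ inferInstance φ).choose

@[simp]
lemma extend_ι (φ : A →L[ℂ] B →L[ℂ] E) (a : A) (b : B) : P.extend φ (P.ι a b) = φ a b :=
  (P.lift E _ _ inferInstance φ).choose_spec.1 a b

end

variable {X : Type} [NormedAddCommGroup X] [NormedSpace ℂ X]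

/-- The derivation of `A ⊗̂ B` obtained from a derivation pair by expanding
`D (a ⊗ b) = D ((a ⊗ 1)(1 ⊗ b))`. -/
noncomputable def derivation (π : CommutingBimodules A B X) (D₁ : A →L[ℂ] X →L[ℂ] ℂ)
    (D₂ : B →L[ℂ] X →L[ℂ] ℂ) : T →L[ℂ] X →L[ℂ] ℂ :=
  P.extend ((ContinuousLinearMap.compL ℂ X X ℂ).bilinearComp D₁ π.snd.L +
    ((ContinuousLinearMap.compL ℂ X X ℂ).bilinearComp D₂ π.fst.R).flip)

@[simp]
lemma derivation_ι (π : CommutingBimodules A B X) (D₁ : A →L[ℂ] X →L[ℂ] ℂ)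
    (D₂ : B →L[ℂ] X →L[ℂ] ℂ) (a : A) (b : B) (x : X) :
    P.derivation π D₁ D₂ (P.ι a b) x = D₁ a (π.snd.L b x) + D₂ b (π.fst.R a x) := by
  simp [derivation]

variable [CompleteSpace X] [IsScalarTower ℂ T T] [SMulCommClass ℂ T T]

/-- The bimodule over `A ⊗̂ B` with `(a ⊗ b)·x = a·(b·x)` and `x·(a ⊗ b) = (x·b)·a`. -/
noncomputable def bimodule (π : CommutingBimodules A B X) : BanachBimodule T X where
  L := P.extend ((ContinuousLinearMap.compL ℂ X X X).bilinearComp π.fst.L π.snd.L)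
  R := P.extend ((ContinuousLinearMap.compL ℂ X X X).bilinearComp π.fst.R π.snd.R)
  L_mul s t := by
    let L := P.extend ((ContinuousLinearMap.compL ℂ X X X).bilinearComp π.fst.L π.snd.L)
    have : (ContinuousLinearMap.compL ℂ T T _ L) ∘L ContinuousLinearMap.mul ℂ T =
        (ContinuousLinearMap.compL ℂ X X X).bilinearComp L L :=
      P.clm_ext₂ fun a b c d => by
        ext x; simp [L, P.ι_mul, π.fst.L_mul, π.snd.L_mul, π.L_L_comm]
    exact congr($this s t)
  R_mul s t := by
    let R := P.extend ((ContinuousLinearMap.compL ℂ X X X).bilinearComp π.fst.R π.snd.R)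
    have : (ContinuousLinearMap.compL ℂ T T _ R) ∘L ContinuousLinearMap.mul ℂ T =
        ((ContinuousLinearMap.compL ℂ X X X).bilinearComp R R).flip :=
      P.clm_ext₂ fun a b c d => by
        ext x; simp [R, P.ι_mul, π.fst.R_mul, π.snd.R_mul, π.R_R_comm]
    exact congr($this s t)
  LR_comm s t x := by
    let L := P.extend ((ContinuousLinearMap.compL ℂ X X X).bilinearComp π.fst.L π.snd.L)
    let R := P.extend ((ContinuousLinearMap.compL ℂ X X X).bilinearComp π.fst.R π.snd.R)
    have : ((ContinuousLinearMap.compL ℂ X X X).bilinearComp R L).flip =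
        (ContinuousLinearMap.compL ℂ X X X).bilinearComp L R :=
      P.clm_ext₂ fun a b c d => by
        ext x
        simp [L, R, π.fst.LR_comm, π.snd.LR_comm, ← π.L_R_comm, π.R_L_comm]
    exact congr($this s t x)

@[simp]
lemma bimodule_L_ι (π : CommutingBimodules A B X) (a : A) (b : B) (x : X) :
    (P.bimodule π).L (P.ι a b) x = π.fst.L a (π.snd.L b x) := by
  simp [bimodule]

@[simp]
lemma bimodule_R_ι (π : CommutingBimodules A B X) (a : A) (b : B) (x : X) :
    (P.bimodule π).R (P.ι a b) x = π.fst.R a (π.snd.R b x) := by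
  simp [bimodule]

lemma isDualDerivation_derivation {π : CommutingBimodules A B X} {D₁ : A →L[ℂ] X →L[ℂ] ℂ}
    {D₂ : B →L[ℂ] X →L[ℂ] ℂ} (h : IsDerivationPair π D₁ D₂) :
    IsDualDerivation (P.bimodule π) (P.derivation π D₁ D₂) := by
  intro s t x
  let D := P.derivation π D₁ D₂
  have : (ContinuousLinearMap.compL ℂ T T _ D) ∘L ContinuousLinearMap.mul ℂ T =
      ((ContinuousLinearMap.compL ℂ X X ℂ).bilinearComp D (P.bimodule π).R).flip +
        (ContinuousLinearMap.compL ℂ X X ℂ).bilinearComp D (P.bimodule π).L :=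
    P.clm_ext₂ fun a b c d => by
      ext x
      have h₁₂ := h.compat c b (π.fst.R a (π.snd.L d x))
      have h₁ := h.fst a c (π.snd.L (b * d) x)
      have h₂ := h.snd b d (π.fst.R (a * c) x)
      simp only [D, P.ι_mul, π.fst.R_mul, π.snd.L_mul, π.R_R_comm, π.L_L_comm, π.R_L_comm,
        π.fst.LR_comm, π.snd.LR_comm, derivation_ι, bimodule_L_ι, bimodule_R_ι, add_apply,
        ContinuousLinearMap.comp_apply, ContinuousLinearMap.compL_apply,
        ContinuousLinearMap.mul_apply', ContinuousLinearMap.flip_apply,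
        ContinuousLinearMap.bilinearComp_apply] at h₁ h₂ h₁₂ ⊢
      linear_combination h₁ + h₂ + h₁₂
  exact congr($this s t x)

include P in
lemma pairAmenable {U : Filter A} {V : Filter B} (hU : IsBoundedApproximateUnit U)
    (hV : IsBoundedApproximateUnit V) (hT : Amenable T) : PairAmenable U V := by
  intro X _ _ _ π D₁ D₂ hπU hπV hD
  have := hU.neBot
  have := hV.neBot
  obtain ⟨f, hf⟩ := hT X _ _ inferInstance _ _ (P.isDualDerivation_derivation hD)
  have hf (a : A) (b : B) (x : X) : f (π.fst.R a (π.snd.R b x)) - f (π.fst.L a (π.snd.L b x)) =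
      D₁ a (π.snd.L b x) + D₂ b (π.fst.R a x) := by
    simpa using (hf (P.ι a b) x).symm
  refine ⟨f, ?_, ?_⟩
  · ext a x
    have hRL := ((((f ∘L π.fst.R a).continuous.tendsto x).comp (hπV.tendsto_R x)).sub
      (((f ∘L π.fst.L a).continuous.tendsto x).comp (hπV.tendsto_L x)))
    have hD₁ := (((D₁ a).continuous.tendsto x).comp (hπV.tendsto_L x)).add
      (hD.snd.tendsto_zero hπV hV (π.fst.R a x))
    simpa using tendsto_nhds_unique hD₁ (hRL.congr fun b => hf a b x)
  · ext b x
    have hRL := ((((f ∘L π.snd.R b).continuous.tendsto x).comp (hπU.tendsto_R x)).sub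
      (((f ∘L π.snd.L b).continuous.tendsto x).comp (hπU.tendsto_L x)))
    have hD₂ := (hD.fst.tendsto_zero hπU hU (π.snd.R b x)).add
      (((D₂ b).continuous.tendsto x).comp (hπU.tendsto_L x))
    simpa using tendsto_nhds_unique hD₂ (hRL.congr fun a => by
      simpa [π.R_R_comm, π.L_L_comm] using (hf a b x).trans (hD.compat a b x))

end IsProjTensorProduct

end ProjectiveTensorProduct

section TensorAction

variable {𝕜 A B X E : Type*} [NontriviallyNormedField 𝕜]
  [NonUnitalNormedRing A] [NormedSpace 𝕜 A] [NonUnitalNormedRing B] [NormedSpace 𝕜 B]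
  [NormedAddCommGroup X] [NormedSpace 𝕜 X] [NormedAddCommGroup E] [NormedSpace 𝕜 E]

/-- A bilinear map, with both arguments transported to the opposite spaces. -/
noncomputable def opArgs (K : A →L[𝕜] B →L[𝕜] E) : Aᵐᵒᵖ →L[𝕜] Bᵐᵒᵖ →L[𝕜] E :=
  K.bilinearComp (opContinuousLinearEquiv 𝕜).symm.toContinuousLinearMap
    (opContinuousLinearEquiv 𝕜).symm.toContinuousLinearMap

lemma isPartialLimit_opArgs_iff {K : A →L[𝕜] B →L[𝕜] X →L[𝕜] E} {V : Filter B}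
    {G : Aᵐᵒᵖ →L[𝕜] X →L[𝕜] E} : IsPartialLimit (opArgs K) (V.map op) G ↔
      IsPartialLimit K V (G ∘L (opContinuousLinearEquiv 𝕜).toContinuousLinearMap) :=
  ⟨fun h a x => tendsto_map'_iff.1 (h (op a) x), fun h a x => tendsto_map'_iff.2 (h a.unop x)⟩

/-- An action of the algebraic tensor product of `A` and `B` on `X` (`φ a b` is the action of
`a ⊗ b`) which is approximately unital along `U` and `V`. -/
structure IsTensorAction (φ : A →L[𝕜] B →L[𝕜] X →L[𝕜] X) (U : Filter A) (V : Filter B) : Prop where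
  mul_apply : ∀ a a' b b' x, φ (a * a') (b * b') x = φ a b (φ a' b' x)
  tendsto : ∀ x, Tendsto (fun p : A × B => φ p.1 p.2 x) (U ×ˢ V) (𝓝 x)

namespace IsTensorAction

variable {φ : A →L[𝕜] B →L[𝕜] X →L[𝕜] X} {U : Filter A} {V : Filter B}

lemma flip (hφ : IsTensorAction φ U V) : IsTensorAction φ.flip V U where
  mul_apply b b' a a' := hφ.mul_apply a a' b b'
  tendsto x := by
    rw [prod_comm]
    exact tendsto_map'_iff.2 (hφ.tendsto x)

lemma dense_range [U.NeBot] [V.NeBot] (hφ : IsTensorAction φ U V) :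
    Dense (Set.range fun p : A × B × X => φ p.1 p.2.1 p.2.2) := fun x =>
  mem_closure_of_tendsto (hφ.tendsto x) (.of_forall fun p => ⟨(p.1, p.2, x), rfl⟩)

variable {l : A →L[𝕜] X →L[𝕜] X} {l' : B →L[𝕜] X →L[𝕜] X}

lemma exists_isPartialLimit [CompleteSpace X] [U.NeBot] (hφ : IsTensorAction φ U V)
    (hV : IsBoundedApproximateUnit V) : ∃ l, IsPartialLimit φ V l := by
  have := hV.neBot
  refine _root_.exists_isPartialLimit φ hV.bounded hφ.dense_range fun a => ?_
  rintro _ ⟨⟨c, d, y⟩, rfl⟩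
  refine ⟨φ (a * c) d y, ?_⟩
  simpa only [hφ.mul_apply] using tendsto_clm_apply_left (φ (a * c)) (hV.tendsto_mul_right d) y

lemma apply_apply_left (hφ : IsTensorAction φ U V) (hV : IsBoundedApproximateUnit V)
    (hl : IsPartialLimit φ V l) (a c : A) (b : B) (x : X) : φ a b (l c x) = φ (a * c) b x := by
  have := hV.neBot
  refine tendsto_nhds_unique (((φ a b).continuous.tendsto _).comp (hl c x)) ?_
  simpa only [Function.comp_def, hφ.mul_apply] using
    tendsto_clm_apply_left (φ (a * c)) (hV.tendsto_mul_left b) x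

lemma left_mul (hφ : IsTensorAction φ U V) (hV : IsBoundedApproximateUnit V)
    (hl : IsPartialLimit φ V l) (a c : A) (x : X) :
    l (a * c) x = l a (l c x) := by
  have := hV.neBot
  refine tendsto_nhds_unique (hl (a * c) x) ?_
  simpa only [hφ.apply_apply_left hV hl] using hl a (l c x)

lemma left_right (hφ : IsTensorAction φ U V) (hU : IsBoundedApproximateUnit U)
    (hV : IsBoundedApproximateUnit V) (hl : IsPartialLimit φ V l)
    (hl' : IsPartialLimit φ.flip U l') (a : A) (b : B) (x : X) : l a (l' b x) = φ a b x := by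
  have := hV.neBot
  refine tendsto_nhds_unique (hl a (l' b x)) ?_
  have h (v : B) : φ a v (l' b x) = φ a (v * b) x := hφ.flip.apply_apply_left hU hl' v b a x
  simpa only [h] using tendsto_clm_apply_left (φ a) (hV.tendsto_mul_right b) x

end IsTensorAction

lemma IsPartialLimit.comm {A' B' : Type*} [NonUnitalNormedRing A'] [NormedSpace 𝕜 A']
    [NonUnitalNormedRing B'] [NormedSpace 𝕜 B'] {K : A →L[𝕜] B →L[𝕜] X →L[𝕜] X}
    {K' : A' →L[𝕜] B' →L[𝕜] X →L[𝕜] X} {V : Filter B} {V' : Filter B'} [V.NeBot] [V'.NeBot]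
    {G : A →L[𝕜] X →L[𝕜] X} {G' : A' →L[𝕜] X →L[𝕜] X} (h : IsPartialLimit K V G)
    (h' : IsPartialLimit K' V' G') {a : A} {a' : A'}
    (hcomm : ∀ b b' x, K a b (K' a' b' x) = K' a' b' (K a b x)) (x : X) :
    G a (G' a' x) = G' a' (G a x) := by
  have hG' (b : B) : K a b (G' a' x) = G' a' (K a b x) :=
    tendsto_nhds_unique (((K a b).continuous.tendsto _).comp (h' a' x))
      (by simpa only [Function.comp_def, hcomm] using h' a' (K a b x))
  exact tendsto_nhds_unique (h a (G' a' x))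
    (by simpa only [Function.comp_def, hG'] using ((G' a').continuous.tendsto _).comp (h a x))

end TensorAction

section Factorization

variable {A B T X : Type*} [NonUnitalNormedRing A] [NormedSpace ℂ A]
  [NonUnitalNormedRing B] [NormedSpace ℂ B] [NonUnitalNormedRing T] [NormedSpace ℂ T]
  [NormedAddCommGroup X] [NormedSpace ℂ X]

/-- The linear map `F`, evaluated on the values of the bilinear map `k`. -/
noncomputable def pullback {E : Type*} [NormedAddCommGroup E] [NormedSpace ℂ E]
    (k : A →L[ℂ] B →L[ℂ] T) (F : T →L[ℂ] E) : A →L[ℂ] B →L[ℂ] E :=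
  ContinuousLinearMap.compL ℂ B T E F ∘L k

namespace BanachBimodule

variable {k : A →L[ℂ] B →L[ℂ] T} {U : Filter A} {V : Filter B} {σ : BanachBimodule T X}

lemma IsEssential.flip (hσ : σ.IsEssential (map (fun p : A × B => k p.1 p.2) (U ×ˢ V))) :
    σ.IsEssential (map (fun p : B × A => k.flip p.1 p.2) (V ×ˢ U)) := by
  rw [prod_comm]
  exact hσ

lemma IsEssential.isTensorAction_L (hk : ∀ a c b d, k a b * k c d = k (a * c) (b * d))
    (hσ : σ.IsEssential (map (fun p : A × B => k p.1 p.2) (U ×ˢ V))) :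
    IsTensorAction (pullback k σ.L) U V where
  mul_apply a a' b b' x := by simp [pullback, ← hk, σ.L_mul]
  tendsto x := tendsto_map'_iff.1 (hσ.tendsto_L x)

lemma IsEssential.isTensorAction_R (hk : ∀ a c b d, k a b * k c d = k (a * c) (b * d))
    (hσ : σ.IsEssential (map (fun p : A × B => k p.1 p.2) (U ×ˢ V))) :
    IsTensorAction (opArgs (pullback k σ.R)) (U.map op) (V.map op) where
  mul_apply a a' b b' x := by simp [opArgs, pullback, ← hk, σ.R_mul]
  tendsto x := by
    rw [prod_map_map_eq]
    exact tendsto_map'_iff.2 (tendsto_map'_iff.1 (hσ.tendsto_R x))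

/-- The bimodule `τ` over the first factor is the restriction of the bimodule `σ` over `A ⊗̂ B`
along `a ↦ a ⊗ 1`, the unit of `B` being replaced by the approximate unit `V`. -/
structure IsFactor (k : A →L[ℂ] B →L[ℂ] T) (V : Filter B) (σ : BanachBimodule T X)
    (τ : BanachBimodule A X) : Prop where
  L : IsPartialLimit (pullback k σ.L) V τ.L
  R : IsPartialLimit (pullback k σ.R) V τ.R

lemma IsEssential.exists_isFactor [CompleteSpace X]
    (hk : ∀ a c b d, k a b * k c d = k (a * c) (b * d))
    (hσ : σ.IsEssential (map (fun p : A × B => k p.1 p.2) (U ×ˢ V))) [U.NeBot]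
    (hV : IsBoundedApproximateUnit V) : ∃ τ, IsFactor k V σ τ := by
  have := hV.neBot
  have hL := hσ.isTensorAction_L hk
  have hR := hσ.isTensorAction_R hk
  obtain ⟨l, hl⟩ := hL.exists_isPartialLimit hV
  obtain ⟨r, hr⟩ := hR.exists_isPartialLimit hV.map_op
  have hr' := isPartialLimit_opArgs_iff.1 hr
  refine ⟨{ L := l
            R := r ∘L (opContinuousLinearEquiv ℂ).toContinuousLinearMap
            L_mul := fun a b => ?_, R_mul := fun a b => ?_, LR_comm := fun a b x => ?_ }, hl, hr'⟩
  · ext x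
    exact hL.left_mul hV hl a b x
  · ext x
    exact hR.left_mul hV.map_op hr (op b) (op a) x
  · exact hr'.comm hl (fun w v z => σ.LR_comm (k a v) (k b w) z) x

namespace IsFactor

variable {D : T →L[ℂ] X →L[ℂ] ℂ} {D₁ : A →L[ℂ] X →L[ℂ] ℂ} {D₂ : B →L[ℂ] X →L[ℂ] ℂ}
  {τ₁ : BanachBimodule A X} {τ₂ : BanachBimodule B X}

lemma isEssential [V.NeBot] (h₁ : IsFactor k V σ τ₁)
    (hσ : σ.IsEssential (map (fun p : A × B => k p.1 p.2) (U ×ˢ V))) : τ₁.IsEssential U where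
  tendsto_L x := tendsto_of_tendsto_prod (tendsto_map'_iff.1 (hσ.tendsto_L x)) (h₁.L · x)
  tendsto_R x := tendsto_of_tendsto_prod (tendsto_map'_iff.1 (hσ.tendsto_R x)) (h₁.R · x)

section Commutation

variable (h₁ : IsFactor k V σ τ₁) (h₂ : IsFactor k.flip U σ τ₂)
include h₁ h₂

lemma L_R_comm [U.NeBot] [V.NeBot] (a : A) (b : B) (x : X) :
    τ₁.L a (τ₂.R b x) = τ₂.R b (τ₁.L a x) :=
  h₁.L.comm h₂.R (fun v u y => (σ.LR_comm (k a v) (k u b) y).symm) x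

variable (hk : ∀ a c b d, k a b * k c d = k (a * c) (b * d))
  (hσ : σ.IsEssential (map (fun p : A × B => k p.1 p.2) (U ×ˢ V)))
  (hU : IsBoundedApproximateUnit U) (hV : IsBoundedApproximateUnit V)
include hk hσ hU hV

lemma L_L_apply (a : A) (b : B) (x : X) : τ₁.L a (τ₂.L b x) = σ.L (k a b) x :=
  (hσ.isTensorAction_L hk).left_right hU hV h₁.L h₂.L a b x

lemma R_R_apply (a : A) (b : B) (x : X) : τ₁.R a (τ₂.R b x) = σ.R (k a b) x := by
  let r₁ := τ₁.R ∘L (opContinuousLinearEquiv ℂ (M := A)).symm.toContinuousLinearMap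
  let r₂ := τ₂.R ∘L (opContinuousLinearEquiv ℂ (M := B)).symm.toContinuousLinearMap
  have hr₁ : IsPartialLimit (opArgs (pullback k σ.R)) (V.map op) r₁ :=
    isPartialLimit_opArgs_iff.2 h₁.R
  have hr₂ : IsPartialLimit (opArgs (pullback k σ.R)).flip (U.map op) r₂ :=
    (isPartialLimit_opArgs_iff (K := (pullback k σ.R).flip)).2 h₂.R
  simpa [r₁, r₂, opArgs, pullback] using
    (hσ.isTensorAction_R hk).left_right hU.map_op hV.map_op hr₁ hr₂ (op a) (op b) x

end Commutation

lemma exists_isPartialLimit_of_isDualDerivation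
    (hk : ∀ a c b d, k a b * k c d = k (a * c) (b * d))
    (hσ : σ.IsEssential (map (fun p : A × B => k p.1 p.2) (U ×ˢ V))) [U.NeBot]
    (hV : IsBoundedApproximateUnit V) (h₁ : IsFactor k V σ τ₁) (hD : IsDualDerivation σ D) :
    ∃ D₁, IsPartialLimit (pullback k D) V D₁ := by
  have := hV.neBot
  refine exists_isPartialLimit _ hV.bounded (hσ.isTensorAction_L hk).dense_range fun a => ?_
  rintro _ ⟨⟨c, d, y⟩, rfl⟩
  refine ⟨D (k (a * c) d) y - D (k c d) (τ₁.R a y), ?_⟩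
  have hexpand (v : B) : D (k a v) (σ.L (k c d) y) =
      D (k (a * c) (v * d)) y - D (k c d) (σ.R (k a v) y) := by
    rw [← hk, hD]
    ring
  refine Tendsto.congr (fun v => (hexpand v).symm) (.sub ?_ ?_)
  · exact tendsto_clm_apply_left (pullback k D (a * c)) (hV.tendsto_mul_right d) y
  · exact ((D (k c d)).continuous.tendsto _).comp (h₁.R a y)

lemma derivation_mul_left (hk : ∀ a c b d, k a b * k c d = k (a * c) (b * d))
    (hV : V.IsApproximateUnit) (h₁ : IsFactor k V σ τ₁) (hD : IsDualDerivation σ D)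
    (hD₁ : IsPartialLimit (pullback k D) V D₁) (a c : A) (d : B) (x : X) :
    D (k (a * c) d) x = D (k c d) (τ₁.R a x) + D₁ a (σ.L (k c d) x) := by
  have := hV.neBot
  have hmul (v : B) : D (k (a * c) (v * d)) x =
      D (k c d) (σ.R (k a v) x) + D (k a v) (σ.L (k c d) x) := by
    rw [← hk, hD]
  refine tendsto_nhds_unique (tendsto_clm_apply_left (pullback k D (a * c))
    (hV.tendsto_mul_right d) x) (Tendsto.congr (fun v => (hmul v).symm) ?_)
  exact (((D (k c d)).continuous.tendsto _).comp (h₁.R a x)).add (hD₁ a (σ.L (k c d) x))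

lemma isDualDerivation (hk : ∀ a c b d, k a b * k c d = k (a * c) (b * d))
    (hV : V.IsApproximateUnit) (h₁ : IsFactor k V σ τ₁) (hD : IsDualDerivation σ D)
    (hD₁ : IsPartialLimit (pullback k D) V D₁) : IsDualDerivation τ₁ D₁ := fun a c x => by
  have := hV.neBot
  refine tendsto_nhds_unique (hD₁ (a * c) x) (Tendsto.congr
    (fun d => (h₁.derivation_mul_left hk hV hD hD₁ a c d x).symm) ?_)
  exact (hD₁ c (τ₁.R a x)).add (((D₁ a).continuous.tendsto _).comp (h₁.L c x))

lemma derivation_apply (hk : ∀ a c b d, k a b * k c d = k (a * c) (b * d))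
    (hU : U.IsApproximateUnit) (hV : V.IsApproximateUnit) (h₁ : IsFactor k V σ τ₁)
    (h₂ : IsFactor k.flip U σ τ₂) (hD : IsDualDerivation σ D)
    (hD₁ : IsPartialLimit (pullback k D) V D₁) (hD₂ : IsPartialLimit (pullback k.flip D) U D₂)
    (a : A) (b : B) (x : X) : D (k a b) x = D₂ b (τ₁.R a x) + D₁ a (τ₂.L b x) := by
  have := hU.neBot
  refine tendsto_nhds_unique (tendsto_clm_apply_left (pullback k.flip D b)
    (hU.tendsto_mul_left a) x) (Tendsto.congr
    (fun c => (h₁.derivation_mul_left hk hV hD hD₁ a c b x).symm) ?_)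
  exact (hD₂ b (τ₁.R a x)).add (((D₁ a).continuous.tendsto _).comp (h₂.L b x))

end IsFactor

lemma IsEssential.exists_commutingBimodules [CompleteSpace X]
    (hk : ∀ a c b d, k a b * k c d = k (a * c) (b * d))
    (hσ : σ.IsEssential (map (fun p : A × B => k p.1 p.2) (U ×ˢ V)))
    (hU : IsBoundedApproximateUnit U) (hV : IsBoundedApproximateUnit V) :
    ∃ π : CommutingBimodules A B X, IsFactor k V σ π.fst ∧ IsFactor k.flip U σ π.snd := by
  have := hU.neBot
  have := hV.neBot
  have hk' : ∀ b d a c, k.flip b a * k.flip d c = k.flip (b * d) (a * c) :=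
    fun b d a c => hk a c b d
  obtain ⟨τ₁, h₁⟩ := hσ.exists_isFactor hk hV
  obtain ⟨τ₂, h₂⟩ := hσ.flip.exists_isFactor hk' hU
  exact ⟨{ fst := τ₁
           snd := τ₂
           L_L_comm := fun a b x => (h₁.L_L_apply h₂ hk hσ hU hV a b x).trans
             (h₂.L_L_apply h₁ hk' hσ.flip hV hU b a x).symm
           L_R_comm := h₁.L_R_comm h₂
           R_L_comm := fun a b x => (h₂.L_R_comm h₁ b a x).symm
           R_R_comm := fun a b x => (h₁.R_R_apply h₂ hk hσ hU hV a b x).trans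
             (h₂.R_R_apply h₁ hk' hσ.flip hV hU b a x).symm }, h₁, h₂⟩

end BanachBimodule

lemma IsDualDerivation.exists_isDerivationPair {k : A →L[ℂ] B →L[ℂ] T} {U : Filter A}
    {V : Filter B} {σ : BanachBimodule T X} {π : CommutingBimodules A B X}
    {D : T →L[ℂ] X →L[ℂ] ℂ} (hD : IsDualDerivation σ D)
    (hk : ∀ a c b d, k a b * k c d = k (a * c) (b * d))
    (hσ : σ.IsEssential (map (fun p : A × B => k p.1 p.2) (U ×ˢ V)))
    (hU : IsBoundedApproximateUnit U) (hV : IsBoundedApproximateUnit V)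
    (h₁ : σ.IsFactor k V π.fst) (h₂ : σ.IsFactor k.flip U π.snd) :
    ∃ D₁ D₂, IsDerivationPair π D₁ D₂ ∧
      ∀ a b x, D (k a b) x = D₂ b (π.fst.R a x) + D₁ a (π.snd.L b x) := by
  have hU' := hU.toIsApproximateUnit
  have hV' := hV.toIsApproximateUnit
  have := hU.neBot
  have := hV.neBot
  have hk' : ∀ b d a c, k.flip b a * k.flip d c = k.flip (b * d) (a * c) :=
    fun b d a c => hk a c b d
  obtain ⟨D₁, hD₁⟩ := h₁.exists_isPartialLimit_of_isDualDerivation hk hσ hV hD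
  obtain ⟨D₂, hD₂⟩ := h₂.exists_isPartialLimit_of_isDualDerivation hk' hσ.flip hU hD
  have hD_eq := h₁.derivation_apply hk hU' hV' h₂ hD hD₁ hD₂
  refine ⟨D₁, D₂, ⟨h₁.isDualDerivation hk hV' hD hD₁, h₂.isDualDerivation hk' hU' hD hD₂,
    fun a b x => ?_⟩, hD_eq⟩
  exact (add_comm _ _).trans ((hD_eq a b x).symm.trans
    (h₂.derivation_apply hk' hV' hU' h₁ hD hD₂ hD₁ b a x))

lemma PairAmenable.amenable [IsScalarTower ℂ T T] [SMulCommClass ℂ T T] {U : Filter A}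
    {V : Filter B} (h : PairAmenable U V) (hU : IsBoundedApproximateUnit U)
    (hV : IsBoundedApproximateUnit V) {k : A →L[ℂ] B →L[ℂ] T}
    (hk : ∀ a c b d, k a b * k c d = k (a * c) (b * d))
    (hk_dense : Dense (Submodule.span ℂ (Set.range fun p : A × B => k p.1 p.2) : Set T)) :
    Amenable T := by
  refine amenable_of_essential (.map_tensor hk hk_dense hU hV) fun X _ _ _ σ D hσ hD => ?_
  have := hU.neBot
  have := hV.neBot
  obtain ⟨π, h₁, h₂⟩ := hσ.exists_commutingBimodules hk hU hV
  obtain ⟨D₁, D₂, hπD, hD_eq⟩ := hD.exists_isDerivationPair hk hσ hU hV h₁ h₂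
  obtain ⟨f, rfl, rfl⟩ := h X π D₁ D₂ (h₁.isEssential hσ) (h₂.isEssential hσ.flip) hπD
  refine isInnerDualDerivation_iff.2 ⟨f, ContinuousLinearMap.ext_on hk_dense ?_⟩
  rintro _ ⟨⟨a, b⟩, rfl⟩
  ext x
  have hL := h₁.L_L_apply h₂ hk hσ hU hV a b x
  have hR := h₁.R_R_apply h₂ hk hσ hU hV a b x
  simp only [hD_eq, BanachBimodule.ad_apply, ← hL, ← hR, π.R_L_comm, π.R_R_comm]
  ring

end Factorization

theorem stmt6_general {A B T₁ T₂ : Type*} [NonUnitalNormedRing A] [NormedSpace ℂ A]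
    [NonUnitalNormedRing B] [NormedSpace ℂ B]
    [NonUnitalNormedRing T₁] [NormedSpace ℂ T₁] [IsScalarTower ℂ T₁ T₁] [SMulCommClass ℂ T₁ T₁]
    [CompleteSpace T₁] [NonUnitalNormedRing T₂] [NormedSpace ℂ T₂] [IsScalarTower ℂ T₂ T₂]
    [SMulCommClass ℂ T₂ T₂] [CompleteSpace T₂] (P₁ : IsProjTensorProduct A B T₁)
    (P₂ : IsProjTensorProduct A Bᵐᵒᵖ T₂) (hA : HasBAI A) (hB : HasBAI B) (hT₁ : Amenable T₁) :
    Amenable T₂ := by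
  obtain ⟨U, hU⟩ := hA.exists_isBoundedApproximateUnit
  obtain ⟨V, hV⟩ := hB.exists_isBoundedApproximateUnit
  have hUV : PairAmenable U (V.map op) := (P₁.pairAmenable hU hV hT₁).map_op
  exact hUV.amenable hU hV.map_op (fun a c b d => P₂.ι_mul a c b d) P₂.dense_span

/-- if `A` has a bounded approximate identity and `A ⊗̂ A` is amenable,
then `A ⊗̂ Aᵒᵖ` is amenable. -/
theorem stmt6 {A T₁ T₂ : Type*} [NonUnitalNormedRing A] [NormedSpace ℂ A] [IsScalarTower ℂ A A] [SMulCommClass ℂ A A] [CompleteSpace A] [NonUnitalNormedRing T₁] [NormedSpace ℂ T₁] [IsScalarTower ℂ T₁ T₁] [SMulCommClass ℂ T₁ T₁] [CompleteSpace T₁] [NonUnitalNormedRing T₂] [NormedSpace ℂ T₂] [IsScalarTower ℂ T₂ T₂] [SMulCommClass ℂ T₂ T₂] [CompleteSpace T₂]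
    (P₁ : IsProjTensorProduct A A T₁) (P₂ : IsProjTensorProduct A Aᵐᵒᵖ T₂)
    (hA : HasBAI A) (hT₁ : Amenable T₁) : Amenable T₂ := by
  exact stmt6_general P₁ P₂ hA hA hT₁
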